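/- Fix reals σ_e² > 0, σ_f² > 0, σ_h² > 0, s > 0, and Q_x, Q_y, Q_xy ∈ ℝ. Define D(b) = (σ_f²+σ_h²)(s+σ_e²) + b² s σ_e², N(b) = (σ_f²+σ_h²) s Q_x + σ_h²(s+σ_e²) Q_y + b² s σ_e² Q_y + b s Q_xy, and ℓ(b) = log D(b) − N(b)/D(b) for b ∈ ℝ (note D(b) > 0 for all b). Set R = (σ_f²+σ_h²)·[(s+σ_e²)(1−Q_y) + s Q_x] + σ_h²(s+σ_e²) Q_y, and coefficients c_3 = 2 σ_e⁴ s, c_2 = σ_e² s Q_xy, c_1 = 2 σ_e² R, c_0 = −Q_xy (σ_f²+σ_h²)(s+σ_e²). Then ℓ is differentiable on ℝ and, for every b ∈ ℝ, ℓ'(b) = 0 if and only if c_3 b³ + c_2 b² + c_1 b + c_0 = 0. -/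

import Mathlib

/-- `D(b) = (σ_f²+σ_h²)(s+σ_e²) + b² s σ_e²` as a function of `b`. -/
noncomputable def Db (σe2 σf2 σh2 s : ℝ) (b : ℝ) : ℝ :=
  (σf2 + σh2) * (s + σe2) + b ^ 2 * s * σe2

/-- `N(b) = (σ_f²+σ_h²) s Q_x + σ_h²(s+σ_e²) Q_y + b² s σ_e² Q_y + b s Q_xy`
as a function of `b`. -/
noncomputable def Nb (σe2 σf2 σh2 s Qx Qy Qxy : ℝ) (b : ℝ) : ℝ :=
  (σf2 + σh2) * s * Qx + σh2 * (s + σe2) * Qy + b ^ 2 * s * σe2 * Qy + b * s * Qxy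

/-- `ℓ(b) = log D(b) − N(b)/D(b)`. -/
noncomputable def ellb (σe2 σf2 σh2 s Qx Qy Qxy : ℝ) (b : ℝ) : ℝ :=
  Real.log (Db σe2 σf2 σh2 s b) - Nb σe2 σf2 σh2 s Qx Qy Qxy b / Db σe2 σf2 σh2 s b

theorem hasDerivAt_log_sub_div {D N : ℝ → ℝ} {D' N' x : ℝ} (hD : HasDerivAt D D' x)
    (hN : HasDerivAt N N' x) (hx : D x ≠ 0) :
    HasDerivAt (fun y => Real.log (D y) - N y / D y)
      (((D x + N x) * D' - N' * D x) / D x ^ 2) x := by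
  refine ((hD.log hx).fun_sub (hN.fun_div hD hx)).congr_deriv ?_
  field_simp
  ring

section

variable (σe2 σf2 σh2 s Qx Qy Qxy b : ℝ)

theorem hasDerivAt_Db : HasDerivAt (Db σe2 σf2 σh2 s) (2 * b * s * σe2) b := by
  have h := (((hasDerivAt_pow 2 b).mul_const s).mul_const σe2).const_add
    ((σf2 + σh2) * (s + σe2))
  exact h.congr_deriv (by ring)

theorem hasDerivAt_Nb :
    HasDerivAt (Nb σe2 σf2 σh2 s Qx Qy Qxy) (2 * b * s * σe2 * Qy + s * Qxy) b := by
  have hquad := ((((hasDerivAt_pow 2 b).mul_const s).mul_const σe2).mul_const Qy).const_add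
    ((σf2 + σh2) * s * Qx + σh2 * (s + σe2) * Qy)
  have hlin := ((hasDerivAt_id b).mul_const s).mul_const Qxy
  exact (hquad.add hlin).congr_deriv (by ring)

/-- The cubic `c₃b³ + c₂b² + c₁b + c₀`: `ℓ'(b)` is `s / D(b)²` times this cubic.
The bracket multiplying `2 * σe2` in the linear coefficient is `R`. -/
def scoreCubic : ℝ :=
  2 * σe2 ^ 2 * s * b ^ 3 + σe2 * s * Qxy * b ^ 2
    + 2 * σe2 * ((σf2 + σh2) * ((s + σe2) * (1 - Qy) + s * Qx) + σh2 * (s + σe2) * Qy) * b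
    + (-(Qxy * (σf2 + σh2) * (s + σe2)))

theorem Db_add_Nb_mul_sub_eq_mul_scoreCubic :
    (Db σe2 σf2 σh2 s b + Nb σe2 σf2 σh2 s Qx Qy Qxy b) * (2 * b * s * σe2)
        - (2 * b * s * σe2 * Qy + s * Qxy) * Db σe2 σf2 σh2 s b
      = s * scoreCubic σe2 σf2 σh2 s Qx Qy Qxy b := by
  unfold Db Nb scoreCubic
  ring

variable {σe2 σf2 σh2 s}

theorem Db_pos (hσe2 : 0 ≤ σe2) (hσ : 0 < σf2 + σh2) (hs : 0 < s) :
    0 < Db σe2 σf2 σh2 s b := by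
  unfold Db
  positivity

variable {b}

theorem hasDerivAt_ellb (hD : Db σe2 σf2 σh2 s b ≠ 0) :
    HasDerivAt (ellb σe2 σf2 σh2 s Qx Qy Qxy)
      (s * scoreCubic σe2 σf2 σh2 s Qx Qy Qxy b / Db σe2 σf2 σh2 s b ^ 2) b := by
  rw [← Db_add_Nb_mul_sub_eq_mul_scoreCubic]
  exact hasDerivAt_log_sub_div (hasDerivAt_Db σe2 σf2 σh2 s b)
    (hasDerivAt_Nb σe2 σf2 σh2 s Qx Qy Qxy b) hD

theorem deriv_ellb_eq_zero_iff (hs : s ≠ 0) (hD : Db σe2 σf2 σh2 s b ≠ 0) :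
    deriv (ellb σe2 σf2 σh2 s Qx Qy Qxy) b = 0 ↔
      scoreCubic σe2 σf2 σh2 s Qx Qy Qxy b = 0 := by
  rw [(hasDerivAt_ellb Qx Qy Qxy hD).deriv, div_eq_zero_iff, or_iff_left (pow_ne_zero 2 hD),
    mul_eq_zero_iff_left hs]

end

/-- `ℓ` is differentiable on `ℝ` and `ℓ'(b) = 0` iff
`c₃b³ + c₂b² + c₁b + c₀ = 0` with `c₃ = 2σ_e⁴s`, `c₂ = σ_e² s Q_xy`,
`c₁ = 2σ_e² R`, `c₀ = −Q_xy(σ_f²+σ_h²)(s+σ_e²)`. -/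
theorem stmt12 (σe2 σf2 σh2 s Qx Qy Qxy : ℝ)
    (hσe2 : 0 < σe2) (hσf2 : 0 < σf2) (hσh2 : 0 < σh2) (hs : 0 < s) :
    Differentiable ℝ (ellb σe2 σf2 σh2 s Qx Qy Qxy) ∧
    ∀ b : ℝ,
      (deriv (ellb σe2 σf2 σh2 s Qx Qy Qxy) b = 0 ↔
        2 * σe2 ^ 2 * s * b ^ 3 + σe2 * s * Qxy * b ^ 2
          + 2 * σe2 * ((σf2 + σh2) * ((s + σe2) * (1 - Qy) + s * Qx)
              + σh2 * (s + σe2) * Qy) * b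
          + (-(Qxy * (σf2 + σh2) * (s + σe2))) = 0) := by
  have hD (b : ℝ) : Db σe2 σf2 σh2 s b ≠ 0 := (Db_pos b hσe2.le (add_pos hσf2 hσh2) hs).ne'
  exact ⟨fun b => (hasDerivAt_ellb Qx Qy Qxy (hD b)).differentiableAt,
    fun b => deriv_ellb_eq_zero_iff Qx Qy Qxy hs.ne' (hD b)⟩
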